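/- Let T be an R-linear triangulated category, C a full subcategory, and r ∈ R. Then T_r * C ⊆ C * T_{r²}, where T_s denotes the full subcategory of objects annihilated by s, and * is the extension operation on subcategories. (Here C is assumed closed under isomorphisms and direct summands as needed.) -/

import Mathlib

/-!
Let `A ⟶ E ⟶ B ⟶ A⟦1⟧` be distinguished with `r` zero on `A`. Then `r : B ⟶ B` lifts to some
`s : B ⟶ E`; let `D` be its cone and `q : D ⟶ B⟦1⟧` the boundary map. The octahedral axiom would
make `D` an extension of the cone `K` of `r : B ⟶ B` by `A`, which shows that `r • 𝟙 D` is a sum of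
a map through `q` and a map through `A`, both killed by `r`; hence `r²` is zero on `D`. The argument
uses only two exactness properties of `A ⟶ D ⟶ K`, and in any pretriangulated category these hold
for every map of cones `D ⟶ K` induced by `E ⟶ B` and the identity of `B`.
-/

open CategoryTheory Limits Pretriangulated

universe v u

variable (C : Type u) [Category.{v} C] [Preadditive C] [HasZeroObject C]
  [HasShift C ℤ] [∀ n : ℤ, (shiftFunctor C n).Additive] [Pretriangulated C]

/-- `starOp C S T` is the class of objects `E` fitting into a distinguished triangle
`A ⟶ E ⟶ B ⟶ A⟦1⟧` with `A ∈ S` and `B ∈ T`. -/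
def starOp (S T : Set C) : Set C :=
  {E | ∃ (A B : C) (f : A ⟶ E) (g : E ⟶ B) (h : B ⟶ A⟦(1 : ℤ)⟧),
    A ∈ S ∧ B ∈ T ∧ Triangle.mk f g h ∈ distTriang C}

variable [HasBinaryBiproducts C]

/-- Closure of a class of objects under finite direct sums, retracts and shifts. -/
inductive AddClosure (S : Set C) : C → Prop
  | of (X : C) : X ∈ S → AddClosure S X
  | zero (X : C) : IsZero X → AddClosure S X
  | shift (X : C) (k : ℤ) : AddClosure S X → AddClosure S (X⟦k⟧)
  | sum (X Y : C) : AddClosure S X → AddClosure S Y → AddClosure S (X ⊞ Y)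
  | retract (X Y : C) (i : X ⟶ Y) (p : Y ⟶ X) :
      i ≫ p = 𝟙 X → AddClosure S Y → AddClosure S X

/-- `pow C S n` is the `n`-fold diamond `S ⋄ ⋯ ⋄ S`, where `S ⋄ T = add (S * T)`. -/
def pow (S : Set C) : ℕ → Set C
  | 0 => {X | IsZero X}
  | n + 1 => {X | AddClosure C (starOp C S (pow S n)) X}

/-- A morphism `f` is a `P`-ghost if every composite `Q⟦k⟧ ⟶ X ⟶ Y` with `Q ∈ P` vanishes. -/
def IsGhost (P : Set C) {X Y : C} (f : X ⟶ Y) : Prop :=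
  ∀ Q ∈ P, ∀ (k : ℤ) (g : Q⟦k⟧ ⟶ X), g ≫ f = 0

/-- `GhostPow C P n f` : `f` is an `n`-fold composite of `P`-ghosts. -/
inductive GhostPow (P : Set C) : ℕ → ∀ {X Y : C}, (X ⟶ Y) → Prop
  | zero {X Y : C} (f : X ⟶ Y) : GhostPow P 0 f
  | comp {n : ℕ} {X Y Z : C} (f : X ⟶ Y) (g : Y ⟶ Z) :
      IsGhost C P f → GhostPow P n g → GhostPow P (n + 1) (f ≫ g)

/-- The objects whose identity is annihilated by the scalar `r`. -/
def Tkill (R : Type*) [CommRing R] [Linear R C] (r : R) : Set C := {X | r • (𝟙 X) = 0}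

section LinearCategory

variable {R 𝒯 : Type*} [Semiring R] [Category* 𝒯] [Preadditive 𝒯] [Linear R 𝒯] {r : R}

lemma smul_hom_eq_zero_of_smul_id_eq_zero {X Y : 𝒯} (hY : r • 𝟙 Y = 0) (f : X ⟶ Y) :
    r • f = 0 := by
  rw [← Category.comp_id f, ← Linear.comp_smul, hY, comp_zero]

lemma smul_id_obj_eq_zero {𝒟 : Type*} [Category* 𝒟] [Preadditive 𝒟] [Linear R 𝒟] (F : 𝒯 ⥤ 𝒟)
    [F.PreservesZeroMorphisms] [F.Linear R] {X : 𝒯} (hX : r • 𝟙 X = 0) : r • 𝟙 (F.obj X) = 0 := by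
  rw [← F.map_id, ← F.map_smul, hX, F.map_zero]

end LinearCategory

section Pretriangulated

variable {𝒯 : Type*} [Category* 𝒯] [Preadditive 𝒯] [HasZeroObject 𝒯] [HasShift 𝒯 ℤ]
  [∀ n : ℤ, (shiftFunctor 𝒯 n).Additive] [Pretriangulated 𝒯]

section ConeOfComposition

variable {A X Y Z D K : 𝒯} {f : A ⟶ Y} {g : Y ⟶ Z} {h : Z ⟶ A⟦(1 : ℤ)⟧}
  {s : X ⟶ Y} {p : Y ⟶ D} {q : D ⟶ X⟦(1 : ℤ)⟧} {a : Z ⟶ K} {b : K ⟶ X⟦(1 : ℤ)⟧} {i : D ⟶ K}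

lemma exists_eq_comp_of_comp_coneMap_eq_zero
    (hg : Triangle.mk f g h ∈ distTriang 𝒯) (hs : Triangle.mk s p q ∈ distTriang 𝒯)
    (hsg : Triangle.mk (s ≫ g) a b ∈ distTriang 𝒯) (hpi : p ≫ i = g ≫ a) (hib : i ≫ b = q)
    {W : 𝒯} (φ : W ⟶ D) (hφ : φ ≫ i = 0) : ∃ n : W ⟶ A, φ = n ≫ f ≫ p := by
  obtain ⟨t, rfl⟩ : ∃ t : W ⟶ Y, φ = t ≫ p :=
    Triangle.coyoneda_exact₃ _ hs φ (show φ ≫ q = 0 by rw [← hib, reassoc_of% hφ, zero_comp])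
  obtain ⟨m, hm⟩ : ∃ m : W ⟶ X, t ≫ g = m ≫ s ≫ g :=
    Triangle.coyoneda_exact₂ _ hsg (t ≫ g) (show (t ≫ g) ≫ a = 0 by
      rw [Category.assoc, ← hpi, ← Category.assoc, hφ])
  obtain ⟨n, hn⟩ : ∃ n : W ⟶ A, t - m ≫ s = n ≫ f :=
    Triangle.coyoneda_exact₂ _ hg (t - m ≫ s) (show (t - m ≫ s) ≫ g = 0 by
      rw [Preadditive.sub_comp, Category.assoc, hm, sub_self])
  have hsp : s ≫ p = 0 := comp_distTriang_mor_zero₁₂ _ hs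
  refine ⟨n, ?_⟩
  rw [← Category.assoc, ← hn, Preadditive.sub_comp, Category.assoc, hsp, comp_zero, sub_zero]

lemma exists_eq_comp_coneMap_of_forall_comp_eq_zero
    (hg : Triangle.mk f g h ∈ distTriang 𝒯) (hs : Triangle.mk s p q ∈ distTriang 𝒯)
    (hsg : Triangle.mk (s ≫ g) a b ∈ distTriang 𝒯) (hpi : p ≫ i = g ≫ a) (hib : i ≫ b = q)
    {W : 𝒯} (y : W ⟶ K) (hy : ∀ m : K ⟶ A⟦(1 : ℤ)⟧, y ≫ m = 0) : ∃ θ : W ⟶ D, y = θ ≫ i := by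
  have hgh : g ≫ h = 0 := comp_distTriang_mor_zero₂₃ _ hg
  obtain ⟨θ, hθ⟩ : ∃ θ : W ⟶ D, y ≫ b = θ ≫ q := by
    obtain ⟨j, hj⟩ : ∃ j : K ⟶ A⟦(1 : ℤ)⟧, b ≫ s⟦(1 : ℤ)⟧' = j ≫ (-f⟦(1 : ℤ)⟧') :=
      Triangle.coyoneda_exact₁ _ (rot_of_distTriang _ hg) _
        (show (b ≫ s⟦(1 : ℤ)⟧') ≫ g⟦(1 : ℤ)⟧' = 0 by
          rw [Category.assoc, ← Functor.map_comp]
          exact comp_distTriang_mor_zero₃₁ _ hsg)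
    exact Triangle.coyoneda_exact₁ _ hs (y ≫ b) (show (y ≫ b) ≫ s⟦(1 : ℤ)⟧' = 0 by
      rw [Category.assoc, hj, reassoc_of% hy j, zero_comp])
  obtain ⟨z, hz⟩ : ∃ z : W ⟶ Z, y - θ ≫ i = z ≫ a :=
    Triangle.coyoneda_exact₃ _ hsg (y - θ ≫ i) (show (y - θ ≫ i) ≫ b = 0 by
      rw [Preadditive.sub_comp, Category.assoc, hib, hθ, sub_self])
  obtain ⟨j, hj⟩ : ∃ j : K ⟶ A⟦(1 : ℤ)⟧, h = a ≫ j :=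
    Triangle.yoneda_exact₂ _ hsg h (show (s ≫ g) ≫ h = 0 by
      rw [Category.assoc, hgh, comp_zero])
  obtain ⟨x, hx⟩ : ∃ x : X⟦(1 : ℤ)⟧ ⟶ A⟦(1 : ℤ)⟧, i ≫ j = q ≫ x :=
    Triangle.yoneda_exact₃ _ hs (i ≫ j) (show p ≫ i ≫ j = 0 by
      rw [reassoc_of% hpi, ← hj, hgh])
  have hzh : z ≫ h = 0 := calc
    z ≫ h = (y - θ ≫ i) ≫ j := by rw [hz, hj, Category.assoc]
    _ = y ≫ j - y ≫ b ≫ x := by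
      rw [Preadditive.sub_comp, Category.assoc, hx, reassoc_of% hθ]
    _ = 0 := by rw [hy, hy, sub_zero]
  obtain ⟨z', rfl⟩ : ∃ z' : W ⟶ Y, z = z' ≫ g := Triangle.coyoneda_exact₃ _ hg z hzh
  refine ⟨θ + z' ≫ p, ?_⟩
  rw [Preadditive.add_comp, Category.assoc, hpi, ← Category.assoc z', ← hz, add_sub_cancel]

end ConeOfComposition

section Linear

variable {R : Type*} [Semiring R] [Linear R 𝒯] {r : R}

lemma exists_smul_id_cone_eq_comp {B K : 𝒯} {a : B ⟶ K} {b : K ⟶ B⟦(1 : ℤ)⟧}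
    (hK : Triangle.mk (r • 𝟙 B) a b ∈ distTriang 𝒯) :
    ∃ y : B⟦(1 : ℤ)⟧ ⟶ K, r • 𝟙 K = b ≫ y := by
  have hra : (r • 𝟙 B) ≫ a = 0 := comp_distTriang_mor_zero₁₂ _ hK
  exact Triangle.yoneda_exact₃ _ hK (r • 𝟙 K) (show a ≫ (r • 𝟙 K) = 0 by simpa using hra)

lemma comp_eq_zero_of_smul_id_cone_eq_comp [(shiftFunctor 𝒯 (1 : ℤ)).Linear R]
    {B K : 𝒯} {a : B ⟶ K} {b : K ⟶ B⟦(1 : ℤ)⟧} (hK : Triangle.mk (r • 𝟙 B) a b ∈ distTriang 𝒯)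
    {y : B⟦(1 : ℤ)⟧ ⟶ K} (hy : r • 𝟙 K = b ≫ y) {W : 𝒯} (hW : r • 𝟙 W = 0) (m : K ⟶ W) :
    y ≫ m = 0 := by
  have hbym : b ≫ y ≫ m = 0 := by
    rw [← Category.assoc, ← hy, Linear.smul_comp, Category.id_comp,
      smul_hom_eq_zero_of_smul_id_eq_zero hW]
  obtain ⟨v, hv⟩ : ∃ v : B⟦(1 : ℤ)⟧ ⟶ W, y ≫ m = (-(r • 𝟙 B)⟦(1 : ℤ)⟧') ≫ v :=
    Triangle.yoneda_exact₃ _ (rot_of_distTriang _ hK) (y ≫ m) hbym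
  rw [hv, Functor.map_smul, Preadditive.neg_comp, Linear.smul_comp,
    smul_hom_eq_zero_of_smul_id_eq_zero hW, neg_zero]

variable [(shiftFunctor 𝒯 (1 : ℤ)).Linear R] {A E B : 𝒯} {f : A ⟶ E} {g : E ⟶ B}
  {h : B ⟶ A⟦(1 : ℤ)⟧}

lemma exists_comp_eq_smul_id (hT : Triangle.mk f g h ∈ distTriang 𝒯) (hA : r • 𝟙 A = 0) :
    ∃ s : B ⟶ E, s ≫ g = r • 𝟙 B := by
  obtain ⟨s, hs⟩ := Triangle.coyoneda_exact₃ _ hT (r • 𝟙 B) (show (r • 𝟙 B) ≫ h = 0 by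
    rw [Linear.smul_comp, smul_hom_eq_zero_of_smul_id_eq_zero (smul_id_obj_eq_zero _ hA)])
  exact ⟨s, hs.symm⟩

variable {D : 𝒯} {s : B ⟶ E} {p : E ⟶ D} {q : D ⟶ B⟦(1 : ℤ)⟧}

lemma exists_smul_id_cone_eq_add (hT : Triangle.mk f g h ∈ distTriang 𝒯) (hA : r • 𝟙 A = 0)
    (hsg : s ≫ g = r • 𝟙 B) (hD : Triangle.mk s p q ∈ distTriang 𝒯) :
    ∃ (θ : B⟦(1 : ℤ)⟧ ⟶ D) (n : D ⟶ A), r • 𝟙 D = q ≫ θ + n ≫ f ≫ p := by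
  obtain ⟨K, a, b, hK⟩ := distinguished_cocone_triangle (s ≫ g)
  obtain ⟨i, hpi, hib⟩ : ∃ i : D ⟶ K, p ≫ i = g ≫ a ∧ q ≫ (𝟙 B)⟦(1 : ℤ)⟧' = i ≫ b :=
    complete_distinguished_triangle_morphism _ _ hD hK (𝟙 B) g (Category.id_comp _).symm
  replace hib : i ≫ b = q := by rw [← hib, CategoryTheory.Functor.map_id, Category.comp_id]
  obtain ⟨y, hby⟩ := exists_smul_id_cone_eq_comp (hsg ▸ hK)
  obtain ⟨θ, rfl⟩ := exists_eq_comp_coneMap_of_forall_comp_eq_zero hT hD hK hpi hib y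
    (comp_eq_zero_of_smul_id_cone_eq_comp (hsg ▸ hK) hby (smul_id_obj_eq_zero _ hA))
  have hi : (r • 𝟙 D - q ≫ θ) ≫ i = 0 := by
    rw [Preadditive.sub_comp, Category.assoc, ← hib, Category.assoc, ← hby]
    simp
  obtain ⟨n, hn⟩ := exists_eq_comp_of_comp_coneMap_eq_zero hT hD hK hpi hib _ hi
  exact ⟨θ, n, sub_eq_iff_eq_add'.mp hn⟩

lemma mul_self_smul_id_cone_eq_zero (hT : Triangle.mk f g h ∈ distTriang 𝒯) (hA : r • 𝟙 A = 0)
    (hsg : s ≫ g = r • 𝟙 B) (hD : Triangle.mk s p q ∈ distTriang 𝒯) : (r * r) • 𝟙 D = 0 := by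
  have hq : r • q = 0 := calc
    r • q = q ≫ (s ≫ g)⟦(1 : ℤ)⟧' := by simp [hsg, Functor.map_smul]
    _ = (q ≫ s⟦(1 : ℤ)⟧') ≫ g⟦(1 : ℤ)⟧' := by rw [Functor.map_comp, Category.assoc]
    _ = 0 := by
      have hqs : q ≫ s⟦(1 : ℤ)⟧' = 0 := comp_distTriang_mor_zero₃₁ _ hD
      rw [hqs, zero_comp]
  obtain ⟨θ, n, hθn⟩ := exists_smul_id_cone_eq_add hT hA hsg hD
  calc
    (r * r) • 𝟙 D = (r • q) ≫ θ + (r • n) ≫ f ≫ p := by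
      rw [mul_smul, hθn, smul_add, Linear.smul_comp, Linear.smul_comp]
    _ = 0 := by
      rw [hq, smul_hom_eq_zero_of_smul_id_eq_zero hA, zero_comp, zero_comp, add_zero]

end Linear

theorem Tkill_star_subset_general (R : Type*) [CommRing R] [Linear R 𝒯]
    [(shiftFunctor 𝒯 (1 : ℤ)).Linear R] (S : Set 𝒯) (r : R) :
    starOp 𝒯 (Tkill 𝒯 R r) S ⊆ starOp 𝒯 S (Tkill 𝒯 R (r * r)) := by
  rintro E ⟨A, B, f, g, h, hA, hB, hT⟩
  obtain ⟨s, hsg⟩ := exists_comp_eq_smul_id hT hA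
  obtain ⟨D, p, q, hD⟩ := distinguished_cocone_triangle s
  exact ⟨B, D, s, p, q, hB, mul_self_smul_id_cone_eq_zero hT hA hsg hD, hD⟩

end Pretriangulated

/-- in an `R`-linear triangulated category, `T_r * C ⊆ C * T_{r²}`
for any isomorphism-closed full subcategory `C`. -/
theorem Tkill_star_subset [IsTriangulated C] (R : Type*) [CommRing R] [Linear R C]
    [∀ n : ℤ, Functor.Linear R (shiftFunctor C n)]
    (S : Set C) (hS : ∀ ⦃X Y : C⦄, (X ≅ Y) → X ∈ S → Y ∈ S) (r : R) :
    starOp C (Tkill C R r) S ⊆ starOp C S (Tkill C R (r * r)) := by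
  exact Tkill_star_subset_general R S r
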